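/- In ℝ³, the eleven vector fields f̃_{α̃,j} = ∇ × (∂_x^γ φ₀ e_k) listed in the divergence-free Hermite table (e.g. f_{(1,1,0),1} = ∇×(φ₀ e₃), f_{(2,1,0),1} = ∇×(∂_{x₁}φ₀ e₃), f_{(1,1,1),1} = ∇×(∂_{x₃}φ₀ e₃), f_{(1,1,1),2} = ∇×(∂_{x₁}φ₀ e₁), etc.) and the polynomial vector fields p_{α̃,j} (e.g. p_{(1,1,0),1} = (-x₂/2, x₁/2, 0)ᵀ, p_{(1,1,1),1} = (x₂x₃,0,0)ᵀ, p_{(1,1,1),2} = (0,0,-x₁x₂)ᵀ, etc.) satisfy the orthonormality relation ⟨p_{α̃,j}, f_{β̃,k}⟩ = δ_{jk} δ_{α̃β̃}, where ⟨u,v⟩ = ∫_{ℝ³} u·v dx. -/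

import Mathlib

open MeasureTheory Real
open scoped ENNReal

noncomputable section

/-- Directional partial derivative in the `i`-th coordinate direction. -/
def pd (i : Fin 3) (f : EuclideanSpace ℝ (Fin 3) → ℝ) :
    EuclideanSpace ℝ (Fin 3) → ℝ :=
  fun x => fderiv ℝ f x (EuclideanSpace.single i 1)

/-- A vector in ℝ³ from its three components. -/
def vec3 (a b c : ℝ) : EuclideanSpace ℝ (Fin 3) :=
  (WithLp.equiv 2 (Fin 3 → ℝ)).symm ![a, b, c]

/-- The curl of a vector field on ℝ³. -/
def curl3 (v : EuclideanSpace ℝ (Fin 3) → EuclideanSpace ℝ (Fin 3))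
    (x : EuclideanSpace ℝ (Fin 3)) : EuclideanSpace ℝ (Fin 3) :=
  vec3 (pd 1 (fun y => v y 2) x - pd 2 (fun y => v y 1) x)
       (pd 2 (fun y => v y 0) x - pd 0 (fun y => v y 2) x)
       (pd 0 (fun y => v y 1) x - pd 1 (fun y => v y 0) x)

/-- The Gaussian `φ₀(x) = (4π)^{-3/2} e^{-|x|²/4}` on ℝ³. -/
def phi3 (x : EuclideanSpace ℝ (Fin 3)) : ℝ :=
  (4 * π) ^ (-(3 : ℝ) / 2) * exp (-‖x‖ ^ 2 / 4)

/-- The eleven polynomial vector fields `p_{α̃,j}` from the divergence-free Hermite table. -/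
def pTab : Fin 11 → EuclideanSpace ℝ (Fin 3) → EuclideanSpace ℝ (Fin 3) :=
  ![fun x => vec3 (-(x 1) / 2) (x 0 / 2) 0,
    fun x => vec3 (x 2 / 2) 0 (-(x 0) / 2),
    fun x => vec3 0 (-(x 2) / 2) (x 1 / 2),
    fun x => vec3 (x 0 * x 1 / 2) (-(x 0) ^ 2 / 4) 0,
    fun x => vec3 ((x 1) ^ 2 / 4) (-(x 0 * x 1) / 2) 0,
    fun x => vec3 (-(x 0 * x 2) / 2) 0 ((x 0) ^ 2 / 4),
    fun x => vec3 (-(x 2) ^ 2 / 4) 0 (x 0 * x 2 / 2),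
    fun x => vec3 0 (x 1 * x 2 / 2) (-(x 1) ^ 2 / 4),
    fun x => vec3 0 ((x 2) ^ 2 / 4) (-(x 1 * x 2) / 2),
    fun x => vec3 (x 1 * x 2) 0 0,
    fun x => vec3 0 0 (-(x 0 * x 1))]

/-- The eleven divergence-free Gaussian vector fields `f_{α̃,j}` from the table. -/
def fTab : Fin 11 → EuclideanSpace ℝ (Fin 3) → EuclideanSpace ℝ (Fin 3) :=
  ![curl3 (fun x => phi3 x • EuclideanSpace.single 2 1),
    curl3 (fun x => phi3 x • EuclideanSpace.single 1 1),
    curl3 (fun x => phi3 x • EuclideanSpace.single 0 1),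
    curl3 (fun x => pd 0 phi3 x • EuclideanSpace.single 2 1),
    curl3 (fun x => pd 1 phi3 x • EuclideanSpace.single 2 1),
    curl3 (fun x => pd 0 phi3 x • EuclideanSpace.single 1 1),
    curl3 (fun x => pd 2 phi3 x • EuclideanSpace.single 1 1),
    curl3 (fun x => pd 1 phi3 x • EuclideanSpace.single 0 1),
    curl3 (fun x => pd 2 phi3 x • EuclideanSpace.single 0 1),
    curl3 (fun x => pd 2 phi3 x • EuclideanSpace.single 2 1),
    curl3 (fun x => pd 0 phi3 x • EuclideanSpace.single 0 1)]

/-!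
A Gaussian is a Schwartz function, so integrating by parts moves the curl onto the polynomial
field: `∫ u · ∇ × (ψ eₙ) = ∫ (∇ × u)ₙ ψ` for `u` of temperate growth and `ψ` Schwartz. With
`f_k = ∇ × (ψ_k eₙ)`, where `ψ_k` is `φ₀` or one of its partial derivatives and `n` depends on `k`,
every pairing becomes a moment of `φ₀` or `∂ᵢφ₀` of degree at most one. The curls `∇ × p_j` are the
basis dual to the `ψ_k eₙ`: since `∫ φ₀ = 1` and `∫ x_j ∂ᵢφ₀ = -δᵢⱼ`, the constant field `eₙ` is
dual to `φ₀ eₙ` and `-x_m eₙ` is dual to `∂_m φ₀ eₙ`. The last two curls carry an extra term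
`x₂ e₂` (coordinate index `1` in the code), which only `∂₂φ₀ e₂` would detect, and this is not in
the table.
-/

open SchwartzMap Function LineDeriv

local notation "ℝ³" => EuclideanSpace ℝ (Fin 3)

section Gaussian

lemma exists_one_add_pow_mul_exp_neg_mul_sq_le {b : ℝ} (hb : 0 < b) (m : ℕ) :
    ∃ C, ∀ r : ℝ, 0 ≤ r → (1 + r) ^ m * exp (-b * r ^ 2) ≤ C := by
  refine ⟨m.factorial * exp (1 + 1 / (4 * b)), fun r hr => ?_⟩
  have hpow : (1 + r) ^ m ≤ m.factorial * exp (1 + r) := by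
    have := pow_div_factorial_le_exp (1 + r) (by positivity) m
    rwa [div_le_iff₀' (by positivity)] at this
  have hsq : r - b * r ^ 2 ≤ 1 / (4 * b) := by
    rw [le_div_iff₀ (by positivity)]
    nlinarith [sq_nonneg (2 * b * r - 1)]
  calc (1 + r) ^ m * exp (-b * r ^ 2)
      ≤ m.factorial * exp (1 + r) * exp (-b * r ^ 2) := by gcongr
    _ = m.factorial * exp (1 + (r - b * r ^ 2)) := by
      rw [mul_assoc, ← exp_add]
      ring_nf
    _ ≤ m.factorial * exp (1 + 1 / (4 * b)) := by gcongr

variable {E : Type*} [NormedAddCommGroup E]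

lemma norm_iteratedFDeriv_exp_comp_le [NormedSpace ℝ E] {f : E → ℝ}
    (hf : f.HasTemperateGrowth) (n : ℕ) :
    ∃ (m : ℕ) (C : ℝ), ∀ x,
      ‖iteratedFDeriv ℝ n (fun y => exp (f y)) x‖ ≤ C * (1 + ‖x‖) ^ m * exp (f x) := by
  obtain ⟨k, C, hC, hbound⟩ := hf.norm_iteratedFDeriv_le_uniform n
  refine ⟨k * n, n.factorial * (C + 1) ^ n, fun x => ?_⟩
  have hbase : 1 ≤ (C + 1) * (1 + ‖x‖) ^ k :=
    one_le_mul_of_one_le_of_one_le (by linarith) (one_le_pow₀ (by simp))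
  have hinner (i : ℕ) (hi : 1 ≤ i) (hin : i ≤ n) :
      ‖iteratedFDeriv ℝ i f x‖ ≤ ((C + 1) * (1 + ‖x‖) ^ k) ^ i :=
    calc ‖iteratedFDeriv ℝ i f x‖ ≤ C * (1 + ‖x‖) ^ k := hbound i hin x
      _ ≤ (C + 1) * (1 + ‖x‖) ^ k := by gcongr; simp
      _ ≤ ((C + 1) * (1 + ‖x‖) ^ k) ^ i := le_self_pow₀ hbase (by lia)
  have houter (i : ℕ) (_ : i ≤ n) : ‖iteratedFDeriv ℝ i exp (f x)‖ ≤ exp (f x) := by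
    simp [norm_iteratedFDeriv_eq_norm_iteratedDeriv, iteratedDeriv_eq_iterate]
  calc ‖iteratedFDeriv ℝ n (exp ∘ f) x‖
      ≤ n.factorial * exp (f x) * ((C + 1) * (1 + ‖x‖) ^ k) ^ n :=
        norm_iteratedFDeriv_comp_le contDiff_exp hf.1 (mod_cast le_top) x houter hinner
    _ = n.factorial * (C + 1) ^ n * (1 + ‖x‖) ^ (k * n) * exp (f x) := by
      rw [mul_pow, ← pow_mul]
      ring

variable [InnerProductSpace ℝ E]

/-- The Gaussian `x ↦ exp (-b ‖x‖²)` as a Schwartz function, the analytic input for integrating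
by parts against it. -/
def gaussianSchwartz {b : ℝ} (hb : 0 < b) : 𝓢(E, ℝ) where
  toFun x := exp (-b * ‖x‖ ^ 2)
  smooth' := contDiff_exp.comp (contDiff_const.mul (contDiff_norm_sq ℝ))
  decay' p n := by
    have hf : (fun x : E => -b * ‖x‖ ^ 2).HasTemperateGrowth :=
      (HasTemperateGrowth.const (-b)).mul (hasTemperateGrowth_norm_sq E)
    obtain ⟨m, C, hC⟩ := norm_iteratedFDeriv_exp_comp_le hf n
    obtain ⟨D, hD⟩ := exists_one_add_pow_mul_exp_neg_mul_sq_le hb (p + m)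
    refine ⟨|C| * D, fun x => ?_⟩
    calc ‖x‖ ^ p * ‖iteratedFDeriv ℝ n (fun y => exp (-b * ‖y‖ ^ 2)) x‖
        ≤ (1 + ‖x‖) ^ p * (|C| * (1 + ‖x‖) ^ m * exp (-b * ‖x‖ ^ 2)) := by
          gcongr
          · simp
          · exact (hC x).trans (by gcongr; exact le_abs_self C)
      _ = |C| * ((1 + ‖x‖) ^ (p + m) * exp (-b * ‖x‖ ^ 2)) := by
        rw [pow_add]
        ring
      _ ≤ |C| * D := by
        gcongr
        exact hD ‖x‖ (norm_nonneg x)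

@[simp]
lemma gaussianSchwartz_apply {b : ℝ} (hb : 0 < b) (x : E) :
    gaussianSchwartz hb x = exp (-b * ‖x‖ ^ 2) :=
  rfl

end Gaussian

section TemperateGrowth

variable {E F : Type*} [NormedAddCommGroup E] [NormedSpace ℝ E] [NormedAddCommGroup F]
  [NormedSpace ℝ F]

lemma hasTemperateGrowth_fderiv {u : E → F} (hu : u.HasTemperateGrowth) :
    (fderiv ℝ u).HasTemperateGrowth :=
  ⟨hu.1.fderiv_right le_rfl, fun n => by
    simpa only [norm_iteratedFDeriv_fderiv] using hu.2 (n + 1)⟩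

lemma hasTemperateGrowth_fderiv_apply {u : E → F} (hu : u.HasTemperateGrowth) (v : E) :
    (fun x => fderiv ℝ u x v).HasTemperateGrowth :=
  (ContinuousLinearMap.apply ℝ F v).hasTemperateGrowth.comp (hasTemperateGrowth_fderiv hu)

@[fun_prop]
lemma hasTemperateGrowth_div_const {u : E → ℝ} (hu : u.HasTemperateGrowth) (c : ℝ) :
    (fun x => u x / c).HasTemperateGrowth := by
  simpa only [div_eq_mul_inv] using! hu.mul (.const c⁻¹)

@[fun_prop]
lemma hasTemperateGrowth_coord {ι : Type*} [Fintype ι] (i : ι) :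
    (fun x : EuclideanSpace ℝ ι => x i).HasTemperateGrowth :=
  (EuclideanSpace.proj i : EuclideanSpace ℝ ι →L[ℝ] ℝ).hasTemperateGrowth

end TemperateGrowth

section Integral

variable {E F : Type*} [NormedAddCommGroup F] [NormedSpace ℝ F] [MeasurableSpace E]

lemma integral_eq_zero_of_odd [AddGroup E] [MeasurableNeg E] {μ : Measure E} [μ.IsNegInvariant]
    {f : E → F} (hf : f.Odd) : ∫ x, f x ∂μ = 0 := by
  have : IsAddTorsionFree F := .of_isTorsionFree ℝ F
  refine self_eq_neg.mp ?_
  calc ∫ x, f x ∂μ = ∫ x, f (-x) ∂μ := (integral_neg_eq_self f μ).symm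
    _ = ∫ x, -f x ∂μ := by simp_rw [hf _]
    _ = -∫ x, f x ∂μ := integral_neg f

variable [NormedAddCommGroup E] [NormedSpace ℝ E] [BorelSpace E] {μ : Measure E} {u : E → ℝ}

lemma integrable_smul_schwartz [SecondCountableTopology E] [μ.HasTemperateGrowth]
    (hu : u.HasTemperateGrowth) (ψ : 𝓢(E, F)) : Integrable (fun x => u x • ψ x) μ := by
  simpa only [smulLeftCLM_apply hu] using (smulLeftCLM F u ψ).integrable (μ := μ)

lemma integral_smul_fderiv_schwartz [FiniteDimensional ℝ E] [μ.IsAddHaarMeasure]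
    (hu : u.HasTemperateGrowth) (ψ : 𝓢(E, F)) (v : E) :
    ∫ x, u x • fderiv ℝ ψ x v ∂μ = -∫ x, fderiv ℝ u x v • ψ x ∂μ :=
  integral_smul_fderiv_eq_neg_fderiv_smul_of_integrable
    (integrable_smul_schwartz (hasTemperateGrowth_fderiv_apply hu v) ψ)
    (integrable_smul_schwartz hu (∂_{v} ψ)) (integrable_smul_schwartz hu ψ)
    (fun x _ => hu.1.differentiable (by simp) x) (fun _ _ => ψ.differentiableAt)

end Integral

section Pd

variable {f g : ℝ³ → ℝ} {x : ℝ³} (i : Fin 3)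

lemma pd_const (c : ℝ) : pd i (fun _ => c) x = 0 := by simp [pd]

lemma pd_coord (j : Fin 3) : pd i (fun y => y j) x = if j = i then 1 else 0 := by
  have h : fderiv ℝ (fun y : ℝ³ => y j) x = EuclideanSpace.proj j :=
    (EuclideanSpace.proj j : ℝ³ →L[ℝ] ℝ).fderiv
  simp [pd, h]

lemma pd_mul (hf : DifferentiableAt ℝ f x) (hg : DifferentiableAt ℝ g x) :
    pd i (fun y => f y * g y) x = f x * pd i g x + g x * pd i f x := by
  simp [pd, fderiv_fun_mul hf hg]

lemma pd_sq (hf : DifferentiableAt ℝ f x) :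
    pd i (fun y => f y ^ 2) x = 2 * f x * pd i f x := by
  simp [pd, fderiv_fun_pow 2 hf]

lemma pd_neg : pd i (fun y => -f y) x = -pd i f x := by
  simp [pd]

lemma pd_div_const (c : ℝ) : pd i (fun y => f y / c) x = pd i f x / c := by
  have h : (fun y => f y / c) = c⁻¹ • f := by
    ext y
    simp [div_eq_inv_mul]
  rw [pd, h, fderiv_const_smul_field, div_eq_inv_mul]
  rfl

end Pd

section Curl

lemma curl3_apply (v : ℝ³ → ℝ³) (x : ℝ³) (i : Fin 3) :
    curl3 v x i = pd (i + 1) (fun y => v y (i + 2)) x - pd (i + 2) (fun y => v y (i + 1)) x := by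
  fin_cases i <;> rfl

lemma curl3_vec3 (a b c : ℝ³ → ℝ) (x : ℝ³) :
    curl3 (fun y => vec3 (a y) (b y) (c y)) x =
      vec3 (pd 1 c x - pd 2 b x) (pd 2 a x - pd 0 c x) (pd 0 b x - pd 1 a x) :=
  rfl

lemma sum_mul_curl3_smul_single (a : Fin 3 → ℝ) (g : ℝ³ → ℝ) (x : ℝ³) (n : Fin 3) :
    ∑ i, a i * curl3 (fun y => g y • EuclideanSpace.single n 1) x i =
      a (n + 1) * pd (n + 2) g x - a (n + 2) * pd (n + 1) g x := by
  fin_cases n <;> simp [curl3, vec3, pd, Fin.sum_univ_three] <;> ring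

lemma integral_mul_pd {u : ℝ³ → ℝ} (hu : u.HasTemperateGrowth) (ψ : 𝓢(ℝ³, ℝ)) (i : Fin 3) :
    ∫ x, u x * pd i ψ x = -∫ x, pd i u x * ψ x :=
  integral_smul_fderiv_schwartz hu ψ _

lemma integral_sum_mul_curl3_smul_single {u : ℝ³ → ℝ³}
    (hu : ∀ i, (fun x => u x i).HasTemperateGrowth) (ψ : 𝓢(ℝ³, ℝ)) (n : Fin 3) :
    ∫ x, ∑ i, u x i * curl3 (fun y => ψ y • EuclideanSpace.single n 1) x i =
      ∫ x, curl3 u x n * ψ x := by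
  have hpd (i j : Fin 3) : Integrable (fun x => pd i (fun y => u y j) x * ψ x) :=
    integrable_smul_schwartz (hasTemperateGrowth_fderiv_apply (hu j) _) ψ
  have hψ (i j : Fin 3) : Integrable (fun x => u x i * pd j ψ x) :=
    integrable_smul_schwartz (hu i) (∂_{EuclideanSpace.single j (1 : ℝ)} ψ)
  simp_rw [fun x => sum_mul_curl3_smul_single (fun i => u x i) ψ x n, curl3_apply, sub_mul]
  rw [integral_sub (hψ _ _) (hψ _ _), integral_sub (hpd _ _) (hpd _ _),
    integral_mul_pd (hu _), integral_mul_pd (hu _)]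
  ring

end Curl

/-- The Gaussian `phi3` as a Schwartz function. -/
def phi3Schwartz : 𝓢(ℝ³, ℝ) :=
  ((4 * π) ^ (-(3 : ℝ) / 2)) • gaussianSchwartz (b := 1 / 4) (by norm_num)

lemma coe_phi3Schwartz : ⇑phi3Schwartz = phi3 := by
  ext x
  simp only [phi3Schwartz, phi3, smul_apply, gaussianSchwartz_apply, smul_eq_mul]
  ring_nf

lemma integral_phi3 : ∫ x, phi3 x = 1 := by
  have hexp (x : ℝ³) : -‖x‖ ^ 2 / 4 = -(1 / 4) * ‖x‖ ^ 2 := by ring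
  simp only [phi3, hexp]
  rw [integral_const_mul, GaussianFourier.integral_rexp_neg_mul_sq_norm (by norm_num),
    finrank_euclideanSpace_fin, show π / (1 / 4) = 4 * π by ring, ← rpow_add (by positivity)]
  norm_num

lemma integral_coord_mul_phi3 (i : Fin 3) : ∫ x, x i * phi3 x = 0 :=
  integral_eq_zero_of_odd fun x => by simp [phi3]

lemma integral_pd_phi3 (i : Fin 3) : ∫ x, pd i phi3 x = 0 := by
  simpa [coe_phi3Schwartz, pd_const] using integral_mul_pd (.const 1) phi3Schwartz i

lemma integral_coord_mul_pd_phi3 (i j : Fin 3) :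
    ∫ x, x j * pd i phi3 x = if j = i then -1 else 0 := by
  have h := integral_mul_pd (hasTemperateGrowth_coord j) phi3Schwartz i
  rw [coe_phi3Schwartz] at h
  rw [h]
  split_ifs with hij <;> simp [pd_coord, hij, integral_phi3]

lemma hasTemperateGrowth_vec3 {a b c : ℝ³ → ℝ} (ha : a.HasTemperateGrowth)
    (hb : b.HasTemperateGrowth) (hc : c.HasTemperateGrowth) (i : Fin 3) :
    (fun x => vec3 (a x) (b x) (c x) i).HasTemperateGrowth := by
  fin_cases i <;> assumption

lemma hasTemperateGrowth_pTab (j : Fin 11) (i : Fin 3) :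
    (fun x => pTab j x i).HasTemperateGrowth := by
  fin_cases j <;> exact hasTemperateGrowth_vec3 (by fun_prop) (by fun_prop) (by fun_prop) i

lemma curl3_pTab (j : Fin 11) (x : ℝ³) :
    curl3 (pTab j) x =
      ![vec3 0 0 1, vec3 0 1 0, vec3 1 0 0, vec3 0 0 (-x 0), vec3 0 0 (-x 1), vec3 0 (-x 0) 0,
        vec3 0 (-x 2) 0, vec3 (-x 1) 0 0, vec3 (-x 2) 0 0, vec3 0 (x 1) (-x 2),
        vec3 (-x 0) (x 1) 0] j := by
  fin_cases j <;> refine (curl3_vec3 _ _ _ x).trans ?_ <;>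
    simp (disch := fun_prop) [pd_const, pd_coord, pd_mul, pd_sq, pd_neg, pd_div_const] <;>
    ring_nf

/-- The scalar amplitudes `ψ_k` for which `fTab k = ∇ × (ψ_k eₙ)`, with `n = fTabAxis k`. -/
def fTabPotential : Fin 11 → 𝓢(ℝ³, ℝ) :=
  let Dφ (i : Fin 3) : 𝓢(ℝ³, ℝ) := ∂_{EuclideanSpace.single i (1 : ℝ)} phi3Schwartz
  ![phi3Schwartz, phi3Schwartz, phi3Schwartz, Dφ 0, Dφ 1, Dφ 0, Dφ 2, Dφ 1, Dφ 2, Dφ 2, Dφ 0]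

/-- The axes `n` for which `fTab k = ∇ × (ψ_k eₙ)`, with `ψ_k = fTabPotential k`. -/
def fTabAxis : Fin 11 → Fin 3 := ![2, 1, 0, 2, 2, 1, 1, 0, 0, 2, 0]

lemma lineDeriv_phi3Schwartz (i : Fin 3) :
    ⇑(∂_{EuclideanSpace.single i (1 : ℝ)} phi3Schwartz : 𝓢(ℝ³, ℝ)) = pd i phi3 := by
  rw [← coe_phi3Schwartz]
  rfl

lemma fTab_eq_curl3 (k : Fin 11) :
    fTab k = curl3 (fun x => fTabPotential k x • EuclideanSpace.single (fTabAxis k) 1) := by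
  fin_cases k <;> simp [fTab, fTabPotential, fTabAxis, coe_phi3Schwartz, lineDeriv_phi3Schwartz]

lemma integral_curl3_pTab_mul_fTabPotential (j k : Fin 11) :
    ∫ x, curl3 (pTab j) x (fTabAxis k) * fTabPotential k x = if j = k then 1 else 0 := by
  simp only [curl3_pTab]
  fin_cases j <;> fin_cases k <;>
    simp [vec3, fTabPotential, fTabAxis, coe_phi3Schwartz, lineDeriv_phi3Schwartz, integral_neg,
    integral_phi3, integral_coord_mul_phi3, integral_pd_phi3, integral_coord_mul_pd_phi3]

/-- Orthonormality of the divergence-free Hermite table: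
`⟨p_{α̃,j}, f_{β̃,k}⟩ = δ_{jk}δ_{α̃β̃}` with `⟨u,v⟩ = ∫ u·v dx`. -/
theorem divfree_hermite_orthonormality (j k : Fin 11) :
    (∫ x : EuclideanSpace ℝ (Fin 3), ∑ i : Fin 3, pTab j x i * fTab k x i) =
      if j = k then 1 else 0 := by
  rw [fTab_eq_curl3, integral_sum_mul_curl3_smul_single (hasTemperateGrowth_pTab j),
    integral_curl3_pTab_mul_fTabPotential]
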